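/- Let $k \ge 1$ and let $a, b, c$ be positive integers satisfying $b \ge a + c + k$. Then there exist matrices $A$ of size $b \times a$ and $B$ of size $c \times b$ whose entries are linear forms in $K[x_0,\dots,x_k]$ such that $B A = 0$, $A$ has rank $a$ at every point of $\mathbb{P}^k$, and $B$ has rank $c$ at every point of $\mathbb{P}^k$ (i.e., there exists a linear monad $0 \to \mathcal{O}_{\mathbb{P}^k}(-1)^{\oplus a} \to \mathcal{O}_{\mathbb{P}^k}^{\oplus b} \to \mathcal{O}_{\mathbb{P}^k}(1)^{\oplus c} \to 0$). -/

import Mathlib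

open Polynomial in
/-- the generic polynomial -/
noncomputable def monZ {R : Type*} [CommRing R] {k : ℕ} (x : Fin (k + 1) → R) : R[X] :=
  ∑ i : Fin (k + 1), Polynomial.monomial (i : ℕ) (x i)

open Polynomial in
noncomputable def monT (S : Type*) [CommRing S] (a c k Q lam j : ℕ) : S[X] →ₗ[S] S :=
  if j < 2 * a + k - 1 then lcoeff S (Q - j) else
    if j - (2 * a + k - 1) ≤ c - a then
      (if j - (2 * a + k - 1) < lam then lcoeff S (j - (2 * a + k - 1)) else 0) +
      (if 1 ≤ j - (2 * a + k - 1) then lcoeff S (Q + (j - (2 * a + k - 1))) else 0)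
    else 0

open Polynomial

theorem monT_map {S S' : Type*} [CommRing S] [CommRing S'] (φ : S →+* S') (a c k Q lam j : ℕ)
    (p : S[X]) : φ (monT S a c k Q lam j p) = monT S' a c k Q lam j (p.map φ) := by
  unfold monT
  split_ifs <;> simp

theorem monZ_coeff {R : Type*} [CommRing R] {k : ℕ} (x : Fin (k + 1) → R) (n : ℕ) :
    (monZ x).coeff n = if h : n < k + 1 then x ⟨n, h⟩ else 0 := by
  unfold monZ
  rw [Polynomial.finsetSum_coeff]
  simp only [Polynomial.coeff_monomial]
  split_ifs with h
  · rw [Finset.sum_eq_single ⟨n, h⟩]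
    · simp
    · intro b _ hb
      rw [if_neg]
      intro hh
      exact hb (Fin.ext hh)
    · simp
  · apply Finset.sum_eq_zero
    intro i _
    rw [if_neg]
    have := i.2
    omega

theorem monZ_map {R S : Type*} [CommRing R] [CommRing S] {k : ℕ} (φ : R →+* S)
    (x : Fin (k + 1) → R) : (monZ x).map φ = monZ (fun i => φ (x i)) := by
  unfold monZ
  simp [Polynomial.map_sum]

theorem mon_cnx {R : Type*} [CommRing R] (p : R[X]) (j : ℕ) :
    (p.comp (-X)).coeff j = (-1) ^ j * p.coeff j := by
  have h : (-X : R[X]) = C (-1) * X := by simp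
  rw [h, Polynomial.comp_C_mul_X_coeff, mul_comm]

/-- alternate signs -/
theorem mon_odd {R : Type*} [CommRing R] (z : R[X]) (n : ℕ) (hn : Odd n) :
    (z * z.comp (-X)).coeff n = 0 := by
  have hc : ∀ j, (z.comp (-X)).coeff j = (-1) ^ j * z.coeff j := by
    intro j
    rw [mon_cnx]
  rw [Polynomial.coeff_mul]
  apply Finset.sum_involution (fun p _ => p.swap)
  · rintro ⟨i, j⟩ hij
    replace hij := Finset.HasAntidiagonal.mem_antidiagonal.mp hij
    dsimp only at hij
    simp only [Prod.fst_swap, Prod.snd_swap, hc]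
    rcases Nat.even_or_odd i with hi | hi
    · have hj : Odd j := by grind
      rw [hi.neg_one_pow, hj.neg_one_pow]; ring
    · have hj : Even j := by grind
      rw [hi.neg_one_pow, hj.neg_one_pow]; ring
  · rintro ⟨i, j⟩ hij _ h
    replace hij := Finset.HasAntidiagonal.mem_antidiagonal.mp hij
    dsimp only at hij
    simp only [Prod.swap_prod_mk, Prod.mk.injEq] at h
    grind
  · rintro ⟨i, j⟩ _
    rfl
  · rintro ⟨i, j⟩ hij
    replace hij := Finset.HasAntidiagonal.mem_antidiagonal.mp hij
    dsimp only at hij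
    apply Finset.HasAntidiagonal.mem_antidiagonal.mpr
    simp only [Prod.swap_prod_mk]
    omega

theorem mon_even_mul {R : Type*} [CommRing R] (p : R[X]) (hp : ∀ n, Odd n → p.coeff n = 0)
    (l n : ℕ) (hn : Odd n) : (p * X ^ (2 * l)).coeff n = 0 := by
  rw [Polynomial.coeff_mul_X_pow']
  split_ifs with h
  · apply hp
    grind
  · rfl

theorem mon_inj {K : Type*} [Field K] (a c k Q lam : ℕ) (ha : 0 < a) (hac : a ≤ c)
    (hQ : Odd Q) (hQ1 : a + c + k ≤ Q + 2) (hQ2 : Q + 1 ≤ a + c + k) (hlam : lam + 2 * a + k = Q + 2)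
    (v : Fin (k + 1) → K) (hv : monZ v ≠ 0) (w : Fin c → K)
    (h : ∀ j < a + c + k, monT K a c k Q lam j
      (∑ l : Fin c, w l • ((monZ v).comp (-X) * X ^ (2 * (l : ℕ)))) = 0) : w = 0 := by
  set z := monZ v with hz
  set Y := ∑ l : Fin c, w l • (z.comp (-X) * X ^ (2 * (l : ℕ))) with hY
  have hzdeg : ∀ n, k < n → z.coeff n = 0 := by
    intro n hn
    rw [hz, monZ_coeff, dif_neg (by omega)]
  have hYdeg : ∀ n, k + 2 * c < n + 2 → Y.coeff n = 0 := by
    intro n hn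
    rw [hY, Polynomial.finsetSum_coeff]
    apply Finset.sum_eq_zero
    intro l _
    have := l.2
    rw [Polynomial.coeff_smul, Polynomial.coeff_mul_X_pow']
    split_ifs
    · rw [mon_cnx, hzdeg _ (by omega)]; simp
    · simp
  have hwin : ∀ n, lam ≤ n → n ≤ Q → Y.coeff n = 0 := by
    intro n h1 h2
    have := h (Q - n) (by omega)
    unfold monT at this
    rw [if_pos (by omega)] at this
    rwa [lcoeff_apply, show Q - (Q - n) = n by omega] at this
  have hfree : ∀ r ≤ c - a, (if r < lam then Y.coeff r else 0) +
      (if 1 ≤ r then Y.coeff (Q + r) else 0) = 0 := by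
    intro r hr
    have := h (2 * a + k - 1 + r) (by omega)
    unfold monT at this
    rw [if_neg (by omega), show 2 * a + k - 1 + r - (2 * a + k - 1) = r by omega, if_pos hr] at this
    rw [LinearMap.add_apply] at this
    split_ifs at this ⊢ <;> simpa using this
  set H : K[X] := ∑ i ∈ Finset.range (k + 2 * c), monomial i (Y.coeff (Q + 1 + i)) with hH
  have hHc : ∀ i, H.coeff i = Y.coeff (Q + 1 + i) := by
    intro i
    rw [hH, Polynomial.finsetSum_coeff]
    simp only [coeff_monomial, Finset.sum_ite_eq', Finset.mem_range]
    split_ifs with hi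
    · rfl
    · rw [hYdeg _ (by omega)]
  have hYH : Y = H * X ^ (Q + 1) - H * X := by
    ext n
    rw [coeff_sub, coeff_mul_X_pow']
    rcases Nat.eq_zero_or_pos n with rfl | hn
    · rw [if_neg (by omega), coeff_mul_X_zero]
      have := hfree 0 (by omega)
      by_cases hl : 0 < lam
      · simpa [hl] using this
      · simpa using hwin 0 (by omega) (by omega)
    · obtain ⟨n, rfl⟩ : ∃ m, n = m + 1 := ⟨n - 1, by omega⟩
      rw [coeff_mul_X, hHc n, show Q + 1 + n = Q + (n + 1) by omega]
      split_ifs with h1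
      · rw [hHc, hYdeg (Q + (n + 1)) (by omega), show Q + 1 + (n + 1 - (Q + 1)) = n + 1 by omega]
        simp
      · by_cases h2 : n + 1 < lam
        · have := hfree (n + 1) (by omega)
          rw [if_pos h2, if_pos (by omega)] at this
          linear_combination this
        · rw [hwin (n + 1) (by omega) (by omega)]
          by_cases h3 : n + 1 ≤ c - a
          · have := hfree (n + 1) h3
            rw [if_neg h2, if_pos (by omega)] at this
            linear_combination this
          · rw [hYdeg _ (by omega)]; simp
  have hodd : ∀ n, Odd n → (z * Y).coeff n = 0 := by
    intro n hn
    rw [hY, Finset.mul_sum, Polynomial.finsetSum_coeff]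
    apply Finset.sum_eq_zero
    intro l _
    rw [mul_smul_comm, coeff_smul, ← mul_assoc, mon_even_mul _ (fun n hn => mon_odd z n hn) _ _ hn,
      smul_zero]
  have hP : z * Y = z * H * X ^ (Q + 1) - z * H * X := by rw [hYH]; ring
  have hPdeg : ∀ n, Q < n → (z * H).coeff n = 0 := by
    intro n hn
    rw [coeff_mul]
    apply Finset.sum_eq_zero
    rintro ⟨i, j⟩ hij
    replace hij := Finset.HasAntidiagonal.mem_antidiagonal.mp hij
    dsimp only at hij
    by_cases hi : k < i
    · simp [hzdeg i hi]
    · simp only [hHc]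
      rw [hYdeg (Q + 1 + j) (by omega)]; simp
  have hP0 : z * H = 0 := by
    ext n
    rw [coeff_zero]
    by_cases hn : Q < n
    · exact hPdeg n hn
    rcases Nat.even_or_odd n with he | ho
    · have := hodd (n + 1) (by grind)
      have hne : n ≠ Q := by rintro rfl; grind
      rw [hP, coeff_sub, coeff_mul_X, coeff_mul_X_pow', if_neg (by omega)] at this
      linear_combination -this
    · have := hodd (n + Q + 1) (by grind)
      rw [hP, coeff_sub, coeff_mul_X, coeff_mul_X_pow', if_pos (by omega),
        hPdeg (n + Q) (by grind), show n + Q + 1 - (Q + 1) = n by omega] at this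
      linear_combination this
  have hH0 : H = 0 := (mul_eq_zero.mp hP0).resolve_left hv
  have hY0 : Y = 0 := by rw [hYH, hH0]; simp
  have hzm : z.comp (-X) ≠ 0 := by
    intro h0
    apply hv
    ext n
    have : (z.comp (-X)).coeff n = 0 := by rw [h0]; simp
    rw [mon_cnx] at this
    rcases Nat.even_or_odd n with he | he <;> simpa [he.neg_one_pow] using this
  have hW : z.comp (-X) * ∑ l : Fin c, w l • (X : K[X]) ^ (2 * (l : ℕ)) = 0 := by
    rw [← hY0, hY, Finset.mul_sum]
    simp [mul_smul_comm]
  have hW0 := (mul_eq_zero.mp hW).resolve_left hzm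
  ext l
  have : (∑ l : Fin c, w l • (X : K[X]) ^ (2 * (l : ℕ))).coeff (2 * l) = 0 := by rw [hW0]; simp
  rw [finsetSum_coeff, Finset.sum_eq_single l] at this
  · simpa using this
  · intro b _ hb
    have : ¬ (2 * (l : ℕ) = 2 * (b : ℕ)) := fun hh => hb (Fin.ext (by omega))
    simp [coeff_X_pow]
    intro hh; exact absurd (Fin.ext hh.symm) hb
  · simp

theorem mon_injA {K : Type*} [Field K] (a k b : ℕ) (hb : 2 * a + k ≤ b + 1)
    (v : Fin (k + 1) → K) (hv : monZ v ≠ 0) (u : Fin a → K)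
    (h : ∀ j < b, (∑ l : Fin a, u l • (monZ v * X ^ (2 * (l : ℕ)))).coeff j = 0) : u = 0 := by
  set z := monZ v with hz
  have hzdeg : ∀ n, k < n → z.coeff n = 0 := by
    intro n hn
    rw [hz, monZ_coeff, dif_neg (by omega)]
  have hY0 : ∑ l : Fin a, u l • (z * X ^ (2 * (l : ℕ))) = 0 := by
    ext n
    by_cases hn : n < b
    · rw [h n hn]; simp
    · rw [Polynomial.finsetSum_coeff]
      apply Finset.sum_eq_zero
      intro l _
      have := l.2
      rw [Polynomial.coeff_smul, Polynomial.coeff_mul_X_pow']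
      split_ifs
      · rw [hzdeg _ (by omega)]; simp
      · simp
  have hW : z * ∑ l : Fin a, u l • (X : K[X]) ^ (2 * (l : ℕ)) = 0 := by
    rw [← hY0, Finset.mul_sum]
    simp [mul_smul_comm]
  have hW0 := (mul_eq_zero.mp hW).resolve_left hv
  ext l
  have : (∑ l : Fin a, u l • (X : K[X]) ^ (2 * (l : ℕ))).coeff (2 * l) = 0 := by rw [hW0]; simp
  rw [finsetSum_coeff, Finset.sum_eq_single l] at this
  · simpa using this
  · intro b _ hb
    simp [coeff_X_pow]
    intro hh; exact absurd (Fin.ext hh.symm) hb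
  · simp

theorem mon_main (K : Type*) [Field K] (k a b c : ℕ) (ha : 0 < a) (hac : a ≤ c)
    (h : b ≥ a + c + k) :
    ∃ (A : Matrix (Fin b) (Fin a) (MvPolynomial (Fin (k + 1)) K))
      (B : Matrix (Fin c) (Fin b) (MvPolynomial (Fin (k + 1)) K)),
      (∀ i j, (A i j).IsHomogeneous 1) ∧
      (∀ i j, (B i j).IsHomogeneous 1) ∧
      B * A = 0 ∧
      (∀ v : Fin (k + 1) → K, v ≠ 0 →
        (A.map (MvPolynomial.eval v)).rank = a ∧
        (B.map (MvPolynomial.eval v)).rank = c) := by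
  obtain ⟨Q, hQ, hQ1, hQ2⟩ : ∃ Q, Odd Q ∧ a + c + k ≤ Q + 2 ∧ Q + 1 ≤ a + c + k := by
    rcases Nat.even_or_odd (a + c + k) with he | ho
    · exact ⟨a + c + k - 1, by grind, by omega, by omega⟩
    · exact ⟨a + c + k - 2, by grind, by omega, by omega⟩
  obtain ⟨lam, hlam⟩ : ∃ lam, lam + 2 * a + k = Q + 2 := ⟨Q + 2 - (2 * a + k), by omega⟩
  let Z : (MvPolynomial (Fin (k + 1)) K)[X] := monZ MvPolynomial.X
  have hZ : ∀ n, (Z.coeff n).IsHomogeneous 1 := by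
    intro n
    simp only [Z, monZ_coeff]
    split_ifs
    · exact MvPolynomial.isHomogeneous_X _ _
    · exact MvPolynomial.isHomogeneous_zero _ _ _
  have hneg : ∀ (p : MvPolynomial (Fin (k + 1)) K), p.IsHomogeneous 1 → (-p).IsHomogeneous 1 := by
    intro p hp
    exact (MvPolynomial.homogeneousSubmodule (Fin (k + 1)) K 1).neg_mem hp
  have hZm : ∀ n, ((Z.comp (-X)).coeff n).IsHomogeneous 1 := by
    intro n
    rw [mon_cnx]
    rcases Nat.even_or_odd n with he | he
    · simpa [he.neg_one_pow] using hZ n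
    · simpa [he.neg_one_pow] using hneg _ (hZ n)
  have hsh : ∀ (p : (MvPolynomial (Fin (k + 1)) K)[X]), (∀ n, (p.coeff n).IsHomogeneous 1) →
      ∀ l n, ((p * X ^ l).coeff n).IsHomogeneous 1 := by
    intro p hp l n
    rw [coeff_mul_X_pow']
    split_ifs
    · exact hp _
    · exact MvPolynomial.isHomogeneous_zero _ _ _
  have hZdeg : ∀ n, k < n → Z.coeff n = 0 := by
    intro n hn
    simp only [Z]
    rw [monZ_coeff, dif_neg (by omega)]
  let A : Matrix (Fin b) (Fin a) (MvPolynomial (Fin (k + 1)) K) :=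
    Matrix.of fun j e => (Z * X ^ (2 * (e : ℕ))).coeff j
  let B : Matrix (Fin c) (Fin b) (MvPolynomial (Fin (k + 1)) K) :=
    Matrix.of fun l j => monT _ a c k Q lam j (Z.comp (-X) * X ^ (2 * (l : ℕ)))
  have hAe : ∀ j e, A j e = (Z * X ^ (2 * (e : ℕ))).coeff j := fun _ _ => rfl
  have hBe : ∀ l j, B l j = monT _ a c k Q lam j (Z.comp (-X) * X ^ (2 * (l : ℕ))) :=
    fun _ _ => rfl
  clear_value A B
  refine ⟨A, B, fun j e => by rw [hAe]; exact hsh _ hZ _ _, ?_, ?_, ?_⟩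
  · intro l j
    rw [hBe]
    unfold monT
    have h0 := MvPolynomial.isHomogeneous_zero (Fin (k + 1)) K 1
    split_ifs <;> simp only [LinearMap.add_apply, LinearMap.zero_apply, lcoeff_apply, add_zero,
      zero_add] <;> first | exact h0 | exact hsh _ hZm _ _ | exact (hsh _ hZm _ _).add (hsh _ hZm _ _)
  · ext1 l e
    rw [Matrix.mul_apply, Matrix.zero_apply]
    have hl := l.2
    have he := e.2
    have hAdeg : ∀ n, 2 * a + k ≤ n + 1 → (Z * X ^ (2 * (e : ℕ))).coeff n = 0 := by
      intro n hn
      rw [coeff_mul_X_pow']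
      split_ifs
      · exact hZdeg _ (by omega)
      · rfl
    have key : ((Z * X ^ (2 * (e : ℕ))) * (Z.comp (-X) * X ^ (2 * (l : ℕ)))).coeff Q = 0 := by
      rw [show (Z * X ^ (2 * (e : ℕ))) * (Z.comp (-X) * X ^ (2 * (l : ℕ))) =
        (Z * Z.comp (-X)) * X ^ (2 * ((e : ℕ) + l)) by ring]
      exact mon_even_mul _ (fun n hn => mon_odd Z n hn) _ _ hQ
    rw [coeff_mul, Finset.Nat.sum_antidiagonal_eq_sum_range_succ_mk] at key
    simp only [hAe, hBe]
    let F : ℕ → MvPolynomial (Fin (k + 1)) K := fun j =>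
      monT (MvPolynomial (Fin (k + 1)) K) a c k Q lam j (Z.comp (-X) * X ^ (2 * (l : ℕ))) *
      (Z * X ^ (2 * (e : ℕ))).coeff j
    refine (Fin.sum_univ_eq_sum_range F b).trans ?_
    simp only [F]
    rw [← key]
    have hs1 : Finset.range (2 * a + k - 1) ⊆ Finset.range b :=
      Finset.range_subset_range.mpr (by omega)
    have hs2 : Finset.range (2 * a + k - 1) ⊆ Finset.range (Q + 1) :=
      Finset.range_subset_range.mpr (by omega)
    rw [← Finset.sum_subset hs1, ← Finset.sum_subset hs2]
    · apply Finset.sum_congr rfl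
      intro j hj
      rw [Finset.mem_range] at hj
      unfold monT
      rw [if_pos hj, lcoeff_apply, mul_comm]
    · intro j _ hj
      rw [Finset.mem_range] at hj
      simp only
      rw [hAdeg j (by omega), zero_mul]
    · intro j _ hj
      rw [Finset.mem_range] at hj
      rw [hAdeg j (by omega), mul_zero]
  · intro v hv
    have hzv : monZ v ≠ 0 := by
      intro h0
      apply hv
      ext i
      have := monZ_coeff v i
      rw [h0, dif_pos i.2] at this
      simpa using this.symm
    have hmap : Z.map (MvPolynomial.eval v) = monZ v := by
      simp only [Z]
      rw [monZ_map]
      simp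
    constructor
    · have hinj : Function.Injective (A.map (MvPolynomial.eval v)).mulVecLin := by
        rw [← LinearMap.ker_eq_bot, LinearMap.ker_eq_bot']
        intro u hu
        apply mon_injA a k b (by omega) v hzv u
        intro j hj
        have := congrFun hu ⟨j, hj⟩
        rw [Matrix.mulVecLin_apply, Matrix.mulVec, dotProduct] at this
        rw [finsetSum_coeff]
        simp only [Pi.zero_apply] at this
        rw [← this]
        apply Finset.sum_congr rfl
        intro e _
        rw [Matrix.map_apply, hAe]
        rw [← coeff_map, Polynomial.map_mul, hmap]
        simp [mul_comm]
      rw [Matrix.rank, LinearMap.finrank_range_of_inj hinj]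
      simp
    · have hinj : Function.Injective (B.map (MvPolynomial.eval v)).transpose.mulVecLin := by
        rw [← LinearMap.ker_eq_bot, LinearMap.ker_eq_bot']
        intro w hw
        apply mon_inj a c k Q lam ha hac hQ hQ1 hQ2 hlam v hzv w
        intro j hj
        have := congrFun hw ⟨j, by omega⟩
        rw [Matrix.mulVecLin_apply, Matrix.mulVec, dotProduct] at this
        rw [map_sum]
        simp only [Pi.zero_apply] at this
        rw [← this]
        apply Finset.sum_congr rfl
        intro l _
        rw [Matrix.transpose_apply, Matrix.map_apply, hBe]
        rw [monT_map, Polynomial.map_mul, Polynomial.map_comp, hmap]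
        simp [mul_comm]
      rw [← Matrix.rank_transpose, Matrix.rank, LinearMap.finrank_range_of_inj hinj]
      simp

/-- Fløystad's existence theorem (sufficiency, condition (2)): if `k ≥ 1` and
`b ≥ a + c + k`, then there is a linear monad
`0 → O_{ℙᵏ}(-1)^⊕a → O_{ℙᵏ}^⊕b → O_{ℙᵏ}(1)^⊕c → 0`, i.e. matrices `A` (size `b × a`) and
`B` (size `c × b`) of linear forms in `K[x₀,…,x_k]` with `B·A = 0`, `A` of rank `a` and `B` of
rank `c` at every point of `ℙᵏ`. -/
theorem stmt_16 (K : Type*) [Field K] (k a b c : ℕ)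
    (hk : 1 ≤ k) (ha : 0 < a) (hb : 0 < b) (hc : 0 < c)
    (h : b ≥ a + c + k) :
    ∃ (A : Matrix (Fin b) (Fin a) (MvPolynomial (Fin (k + 1)) K))
      (B : Matrix (Fin c) (Fin b) (MvPolynomial (Fin (k + 1)) K)),
      (∀ i j, (A i j).IsHomogeneous 1) ∧
      (∀ i j, (B i j).IsHomogeneous 1) ∧
      B * A = 0 ∧
      (∀ v : Fin (k + 1) → K, v ≠ 0 →
        (A.map (MvPolynomial.eval v)).rank = a ∧
        (B.map (MvPolynomial.eval v)).rank = c) := by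
  rcases le_total a c with hac | hac
  · exact mon_main K k a b c ha hac h
  · obtain ⟨A, B, hA, hB, hBA, hr⟩ := mon_main K k c b a hc hac (by omega)
    refine ⟨B.transpose, A.transpose, fun i j => hB j i, fun i j => hA j i, ?_, ?_⟩
    · rw [← Matrix.transpose_mul, hBA, Matrix.transpose_zero]
    · intro v hv
      obtain ⟨h1, h2⟩ := hr v hv
      rw [Matrix.transpose_map, Matrix.transpose_map, Matrix.rank_transpose, Matrix.rank_transpose]
      exact ⟨h2, h1⟩
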